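/- For every T > 0 there is a constant C > 0 such that dist²(G, SO̅(d)) ≤ C · W_cell(G) for all G ∈ ℝ^{d×2^d} with G ⊥ V₀ and |G| ≤ T, where V₀ = {(v,…,v) : v ∈ ℝᵈ} is the subspace of translations. -/

import Mathlib

open scoped BigOperators ENNReal Pointwise
open MeasureTheory Filter Set

attribute [local instance] Classical.propDecidable

noncomputable section

namespace Cleavage

/-- `ℝ^{d × 2^d}`: matrices whose columns are indexed by the corner bit-vectors of a cell. -/
abbrev CellMat (d : ℕ) := Fin d → (Fin d → Bool) → ℝ

/-- Euclidean norm on `ℝ^n`. -/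
def eunorm {n : ℕ} (v : Fin n → ℝ) : ℝ := Real.sqrt (∑ i, v i ^ 2)

/-- Frobenius (Euclidean) norm on `ℝ^{d×2^d}`. -/
def mnorm {d : ℕ} (G : CellMat d) : ℝ := Real.sqrt (∑ j, ∑ b, G j b ^ 2)

/-- corner of the reference cube `[-1/2,1/2)^d` indexed by a bit-vector. -/
def cornerVec {d : ℕ} (b : Fin d → Bool) : Fin d → ℝ := fun i => if b i then 1 / 2 else -(1 / 2)

/-- the matrix `Z` whose columns are the corners `z_i = A·(±1/2,…,±1/2)` of the reference cell. -/
def Zmat (d : ℕ) (A : Matrix (Fin d) (Fin d) ℝ) : CellMat d := fun j b => A.mulVec (cornerVec b) j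

/-- `R ∈ SO(d)`. -/
def IsSO {d : ℕ} (R : Matrix (Fin d) (Fin d) ℝ) : Prop := R.transpose * R = 1 ∧ R.det = 1

/-- the product `R G` of a `d×d` matrix with an element of `ℝ^{d×2^d}`. -/
def rotCell {d : ℕ} (R : Matrix (Fin d) (Fin d) ℝ) (G : CellMat d) : CellMat d :=
  fun j b => ∑ i, R j i * G i b

/-- `F · Z`. -/
def matZ (d : ℕ) (A F : Matrix (Fin d) (Fin d) ℝ) : CellMat d := rotCell F (Zmat d A)

/-- the translation `(c,…,c)`. -/
def transCell {d : ℕ} (c : Fin d → ℝ) : CellMat d := fun j _ => c j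

/-- `SO̅(d) = { R Z : R ∈ SO(d) }`. -/
def SObar (d : ℕ) (A : Matrix (Fin d) (Fin d) ℝ) : Set (CellMat d) :=
  {G | ∃ R : Matrix (Fin d) (Fin d) ℝ, IsSO R ∧ G = rotCell R (Zmat d A)}

/-- Euclidean distance of `G` to `SO̅(d)`. -/
def distSObar (d : ℕ) (A : Matrix (Fin d) (Fin d) ℝ) (G : CellMat d) : ℝ :=
  sInf {t | ∃ H ∈ SObar d A, t = mnorm (G - H)}

/-- `G ⊥ V₀`, i.e. the columns of `G` sum to zero. -/
def PerpTrans {d : ℕ} (G : CellMat d) : Prop := ∀ j, ∑ b, G j b = 0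

/-- Frobenius inner product. -/
def frobInner {d : ℕ} (G H : CellMat d) : ℝ := ∑ j, ∑ b, G j b * H j b

/-- the quadratic form `Q_cell(G) = D²W_cell(Z)[G,G]`. -/
def Qcell (d : ℕ) (A : Matrix (Fin d) (Fin d) ℝ) (W : CellMat d → ℝ) (G : CellMat d) : ℝ :=
  iteratedFDeriv ℝ 2 W (Zmat d A) ![G, G]

/-- Assumption (i): frame indifference. -/
def FrameIndiff (d : ℕ) (W : CellMat d → ℝ) : Prop :=
  ∀ (G : CellMat d) (R : Matrix (Fin d) (Fin d) ℝ) (c : Fin d → ℝ),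
    IsSO R → W (rotCell R G + transCell c) = W G

/-- Assumption (ii): the zero set of the energy. -/
def MinimalOnSO (d : ℕ) (A : Matrix (Fin d) (Fin d) ℝ) (W : CellMat d → ℝ) : Prop :=
  ∀ G : CellMat d, W G = 0 ↔ ∃ R : Matrix (Fin d) (Fin d) ℝ, IsSO R ∧
    ∃ c : Fin d → ℝ, G = rotCell R (Zmat d A) + transCell c

/-- Assumption (iii), smoothness part: `W` continuous and `C²` near `SO̅(d)`. -/
def SmoothNearSO (d : ℕ) (A : Matrix (Fin d) (Fin d) ℝ) (W : CellMat d → ℝ) : Prop :=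
  Continuous W ∧ ∃ U : Set (CellMat d), IsOpen U ∧ SObar d A ⊆ U ∧ ContDiffOn ℝ 2 W U

/-- Assumption (iii), positivity part: `Q_cell` positive definite orthogonally to
translations and infinitesimal rotations. -/
def HessPosDef (d : ℕ) (A : Matrix (Fin d) (Fin d) ℝ) (W : CellMat d → ℝ) : Prop :=
  ∀ G : CellMat d, G ≠ 0 → (∀ c : Fin d → ℝ, frobInner G (transCell c) = 0) →
    (∀ H : Matrix (Fin d) (Fin d) ℝ, H.transpose = -H → frobInner G (rotCell H (Zmat d A)) = 0) →
    0 < Qcell d A W G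

/-- a partition `𝒵 = 𝒵₁ ∪̇ … ∪̇ 𝒵ₙ` of the corners. -/
def IsCellPartition {d n : ℕ} (P : Fin n → Finset (Fin d → Bool)) : Prop :=
  (∀ i, (P i).Nonempty) ∧ (∀ i j, i ≠ j → Disjoint (P i) (P j)) ∧
    Finset.univ.biUnion P = Finset.univ

/-- `(1/2) Σ_{i≠j} Σ_{z_s ∈ 𝒵ᵢ} Σ_{z_t ∈ 𝒵ⱼ} β(z_s,z_t)`. -/
def crossSum {d n : ℕ} (β : (Fin d → Bool) → (Fin d → Bool) → ℝ)
    (P : Fin n → Finset (Fin d → Bool)) : ℝ :=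
  (1 / 2) * ∑ i, ∑ j, if i = j then 0 else ∑ s ∈ P i, ∑ t ∈ P j, β s t

/-- `M ≤ d(G;𝒵ᵢ,𝒵ⱼ)` for all `i ≠ j`. -/
def Separated {d n : ℕ} (M : ℝ) (P : Fin n → Finset (Fin d → Bool)) (G : CellMat d) : Prop :=
  ∀ i j, i ≠ j → ∀ s ∈ P i, ∀ t ∈ P j, M ≤ eunorm (fun jj => G jj s - G jj t)

/-- `G[𝒵ᵢ]`. -/
def restrictCols {d n : ℕ} (P : Fin n → Finset (Fin d → Bool)) (G : CellMat d) (i : Fin n) :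
    {b // b ∈ P i} → Fin d → ℝ := fun b jj => G jj b.1

/-- Assumption (iv): decomposition into pair interactions at large separation,
with the compatibility condition near `SO̅(d)`. -/
def PairDecomposition (d : ℕ) (A : Matrix (Fin d) (Fin d) ℝ) (W : CellMat d → ℝ)
    (β : (Fin d → Bool) → (Fin d → Bool) → ℝ) : Prop :=
  ∀ (n : ℕ), 2 ≤ n → ∀ P : Fin n → Finset (Fin d → Bool), IsCellPartition P →
    ∃ Wc : (i : Fin n) → ({b // b ∈ P i} → Fin d → ℝ) → ℝ,
      (∀ i v, 0 ≤ Wc i v) ∧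
      (∀ δ : ℝ, 0 < δ → ∃ M : ℝ, ∀ G : CellMat d, Separated M P G →
        |W G - ((∑ i, Wc i (restrictCols P G i)) + crossSum β P)| ≤ δ) ∧
      (∃ C, 0 < C ∧ ∃ U : Set (CellMat d), IsOpen U ∧ SObar d A ⊆ U ∧
        ∀ H ∈ U, ∀ i, Wc i (restrictCols P H i) ≤ C * W H)

/-- the triple sum of assumption (iv) is strictly positive unless `n = 1`. -/
def CrossPos (d : ℕ) (β : (Fin d → Bool) → (Fin d → Bool) → ℝ) : Prop :=
  ∀ (n : ℕ), 2 ≤ n → ∀ P : Fin n → Finset (Fin d → Bool), IsCellPartition P → 0 < crossSum β P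

def dotp {n : ℕ} (v w : Fin n → ℝ) : ℝ := ∑ i, v i * w i

/-- the set of interaction directions `𝒱 = A{-1,0,1}^d \ {0}`. -/
def Vfin (d : ℕ) (A : Matrix (Fin d) (Fin d) ℝ) : Finset (Fin d → ℝ) :=
  ((Finset.univ : Finset (Fin d → Fin 3)).image fun t =>
    A.mulVec fun i => ((t i : ℕ) : ℝ) - 1).erase 0

/-- `(1/2) β(z_s,z_t) = 2^{k-d} β(ν)` whenever `z_s - z_t = ν`, `ν` having `k` non-zero entries. -/
def BetaNuCompat (d : ℕ) (A : Matrix (Fin d) (Fin d) ℝ)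
    (β : (Fin d → Bool) → (Fin d → Bool) → ℝ) (βν : (Fin d → ℝ) → ℝ) : Prop :=
  ∀ s t : Fin d → Bool, s ≠ t →
    (1 / 2) * β s t =
      (2 : ℝ) ^ ((((Finset.univ.filter fun i => s i ≠ t i)).card : ℤ) - (d : ℤ)) *
        βν (A.mulVec fun i => cornerVec s i - cornerVec t i)

/-- `β_A = min_{ξ ≠ 0} Σ_ν β(ν)|ν·ξ| / |e₁·ξ|`. -/
def betaA (d : ℕ) [NeZero d] (A : Matrix (Fin d) (Fin d) ℝ) (βν : (Fin d → ℝ) → ℝ) : ℝ :=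
  sInf {q | ∃ ξ : Fin d → ℝ, ξ ≠ 0 ∧ ξ 0 ≠ 0 ∧
    q = (∑ ν ∈ Vfin d A, βν ν * |dotp ν ξ|) / |ξ 0|}

/-- `α_A`, characterized as the minimal value `Q̃(1)` of the reduced minimization problem. -/
def alphaA (d : ℕ) [NeZero d] (A : Matrix (Fin d) (Fin d) ℝ) (W : CellMat d → ℝ) : ℝ :=
  sInf {q | ∃ G : Matrix (Fin d) (Fin d) ℝ, G 0 0 = 1 ∧
    q = Qcell d A W (matZ d A ((1 / 2 : ℝ) • (G + G.transpose)))}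

def M1 (d : ℕ) (A : Matrix (Fin d) (Fin d) ℝ) (βν : (Fin d → ℝ) → ℝ) : ℝ :=
  sInf {m | ∃ ξ : Fin d → ℝ, eunorm ξ = 1 ∧ m = ∑ ν ∈ Vfin d A, βν ν * |dotp ν ξ|}

def M2 (d : ℕ) (A : Matrix (Fin d) (Fin d) ℝ) (βν : (Fin d → ℝ) → ℝ) : ℝ :=
  sSup {m | ∃ ξ : Fin d → ℝ, eunorm ξ = 1 ∧ m = ∑ ν ∈ Vfin d A, βν ν * |dotp ν ξ|}

/-! lattice geometry: the (translated) lattice `ε(ρ + A(k + u))`. -/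

def latPt (d : ℕ) (A : Matrix (Fin d) (Fin d) ℝ) (ε : ℝ) (rv : Fin d → ℝ) (k : Fin d → ℤ)
    (u : Fin d → ℝ) : Fin d → ℝ :=
  ε • A.mulVec fun i => rv i + (k i : ℝ) + u i

def cellCorner (d : ℕ) (A : Matrix (Fin d) (Fin d) ℝ) (ε : ℝ) (rv : Fin d → ℝ) (k : Fin d → ℤ)
    (b : Fin d → Bool) : Fin d → ℝ :=
  latPt d A ε rv k fun i => if b i then 1 else 0

/-- the discrete gradient `∇̄y = ε⁻¹(y₁ - ȳ, …, y_{2^d} - ȳ)` on the cell with index `k`. -/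
def dgrad (d : ℕ) (A : Matrix (Fin d) (Fin d) ℝ) (ε : ℝ) (rv : Fin d → ℝ)
    (y : (Fin d → ℝ) → Fin d → ℝ) (k : Fin d → ℤ) : CellMat d :=
  fun j b =>
    (y (cellCorner d A ε rv k b) j -
      (∑ b' : Fin d → Bool, y (cellCorner d A ε rv k b') j) / 2 ^ d) / ε

/-- the piecewise affine interpolation on the reference cube `[0,1]^n`, obtained inductively
over face dimension through the barycenters of the faces.  On each simplex of the associated
barycentric decomposition it is the affine interpolation of the corner/barycenter values; it is
computed here radially from the barycenter. -/
def cubeInterp : (n : ℕ) → ((Fin n → Bool) → ℝ) → (Fin n → ℝ) → ℝ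
  | 0, f, _ => f fun i => i.elim0
  | n + 1, f, x =>
    let c : ℝ := (∑ b : Fin (n + 1) → Bool, f b) / 2 ^ (n + 1)
    have h : ∃ i : Fin (n + 1), ∀ j : Fin (n + 1), |x j - 1 / 2| ≤ |x i - 1 / 2| :=
      Finite.exists_max fun i => |x i - 1 / 2|
    let i0 := Classical.choose h
    let t := 2 * |x i0 - 1 / 2|
    if t = 0 then c
    else
      (1 - t) * c +
        t * cubeInterp n (fun bb => f (i0.insertNth (if (1 : ℝ) / 2 < x i0 then true else false) bb))
          (fun j => 1 / 2 + (x (i0.succAbove j) - 1 / 2) / t)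

/-- the index of the lattice cell containing `x`. -/
def cellIndex (d : ℕ) (A : Matrix (Fin d) (Fin d) ℝ) (ε : ℝ) (rv : Fin d → ℝ)
    (x : Fin d → ℝ) : Fin d → ℤ :=
  fun i => ⌊(ε • A)⁻¹.mulVec x i - rv i⌋

/-- the reference coordinate (in `[0,1)^d`) of `x` inside its cell. -/
def refCoord (d : ℕ) (A : Matrix (Fin d) (Fin d) ℝ) (ε : ℝ) (rv : Fin d → ℝ)
    (x : Fin d → ℝ) : Fin d → ℝ :=
  fun i => (ε • A)⁻¹.mulVec x i - rv i - (cellIndex d A ε rv x i : ℝ)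

/-- a cell is intact if `diam{∇̄y, 𝒵} ≤ C_int`. -/
def IntactCell (d : ℕ) (A : Matrix (Fin d) (Fin d) ℝ) (ε : ℝ) (rv : Fin d → ℝ) (Cint : ℝ)
    (y : (Fin d → ℝ) → Fin d → ℝ) (k : Fin d → ℤ) : Prop :=
  ∀ b b' : Fin d → Bool,
    eunorm (fun jj => y (cellCorner d A ε rv k b) jj - y (cellCorner d A ε rv k b') jj) ≤ Cint * ε

/-- the interpolation `ỹ`: the simplicial interpolation on intact cells; on broken cells,
componentwise the simplicial interpolation where `diam_i ≤ C_int` and the affine fallback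
`ỹ^i(x) = y^i(z₁) + (x - z₁)_i` otherwise. -/
def tildey (d : ℕ) (A : Matrix (Fin d) (Fin d) ℝ) (ε : ℝ) (rv : Fin d → ℝ) (Cint : ℝ)
    (y : (Fin d → ℝ) → Fin d → ℝ) (x : Fin d → ℝ) : Fin d → ℝ := fun j =>
  let k := cellIndex d A ε rv x
  if IntactCell d A ε rv Cint y k then
    cubeInterp d (fun b => y (cellCorner d A ε rv k b) j) (refCoord d A ε rv x)
  else if ∀ b b' : Fin d → Bool,
      |y (cellCorner d A ε rv k b) j - y (cellCorner d A ε rv k b') j| ≤ Cint * ε then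
    cubeInterp d (fun b => y (cellCorner d A ε rv k b) j) (refCoord d A ε rv x)
  else
    y (cellCorner d A ε rv k fun _ => false) j + (x j - cellCorner d A ε rv k (fun _ => false) j)

/-- the mesoscopic exponent `s = (3d-1)/(3d)`. -/
def sExp (d : ℕ) : ℝ := (3 * d - 1) / (3 * d)


/-! the mesoscopic cell `U_ε = (0,ℓ) × (0,w)^{d-1}` and its energies. -/

def Ubox (d : ℕ) [NeZero d] (ℓ w : ℝ) : Set (Fin d → ℝ) :=
  {x | x 0 ∈ Ioo 0 ℓ ∧ ∀ i : Fin d, i ≠ 0 → x i ∈ Ioo 0 w}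

/-- inner cells: the closure of the cell is contained in `U_ε`. -/
def InnerCellM (d : ℕ) [NeZero d] (A : Matrix (Fin d) (Fin d) ℝ) (ε : ℝ) (rv : Fin d → ℝ)
    (ℓ w : ℝ) (k : Fin d → ℤ) : Prop :=
  ∀ u : Fin d → ℝ, (∀ i, u i ∈ Icc (0 : ℝ) 1) → latPt d A ε rv k u ∈ Ubox d ℓ w

def tailCoords (d : ℕ) (x : Fin d → ℝ) : Fin (d - 1) → ℝ := fun i => x ⟨i.1 + 1, by omega⟩

def consd (d : ℕ) [NeZero d] (a : ℝ) (x' : Fin (d - 1) → ℝ) : Fin d → ℝ :=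
  fun j => if h : (j : ℕ) = 0 then a else x' ⟨(j : ℕ) - 1, by omega⟩

/-- the boundary faces `{0,ℓ} × w·Ws`. -/
def FaceSet (d : ℕ) [NeZero d] (ℓ w : ℝ) (Ws : Set (Fin (d - 1) → ℝ)) : Set (Fin d → ℝ) :=
  {x | (x 0 = 0 ∨ x 0 = ℓ) ∧ tailCoords d x ∈ w • Ws}

/-- cells whose closure meets the boundary faces `{0,ℓ} × w·Ws`. -/
def BoundaryCellM (d : ℕ) [NeZero d] (A : Matrix (Fin d) (Fin d) ℝ) (ε : ℝ) (rv : Fin d → ℝ)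
    (ℓ w : ℝ) (Ws : Set (Fin (d - 1) → ℝ)) (k : Fin d → ℤ) : Prop :=
  ∃ u : Fin d → ℝ, (∀ i, u i ∈ Icc (0 : ℝ) 1) ∧ latPt d A ε rv k u ∈ FaceSet d ℓ w Ws

/-- `E(U_ε, y)`: sum of the cell energies over the inner cells plus one half of the sum over
the boundary cells. -/
def EnergyMeso (d : ℕ) [NeZero d] (A : Matrix (Fin d) (Fin d) ℝ) (Wcell : CellMat d → ℝ)
    (ε : ℝ) (rv : Fin d → ℝ) (ℓ w : ℝ) (Ws : Set (Fin (d - 1) → ℝ))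
    (y : (Fin d → ℝ) → Fin d → ℝ) : ℝ :=
  ε ^ (d - 1) *
    ((∑' k : Fin d → ℤ, if InnerCellM d A ε rv ℓ w k then Wcell (dgrad d A ε rv y k) else 0) +
      (1 / 2) * ∑' k : Fin d → ℤ,
        if BoundaryCellM d A ε rv ℓ w Ws k then Wcell (dgrad d A ε rv y k) else 0)

/-- a cell is `1`-broken if `diam₁{∇̄y, 𝒵} > C*_int`. -/
def OneBroken (d : ℕ) [NeZero d] (A : Matrix (Fin d) (Fin d) ℝ) (ε : ℝ) (rv : Fin d → ℝ)
    (Cstar : ℝ) (y : (Fin d → ℝ) → Fin d → ℝ) (k : Fin d → ℤ) : Prop :=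
  ∃ b b' : Fin d → Bool,
    Cstar * ε < |y (cellCorner d A ε rv k b) 0 - y (cellCorner d A ε rv k b') 0|

/-- the (half open) cell with index `k`. -/
def cellRegion (d : ℕ) (A : Matrix (Fin d) (Fin d) ℝ) (ε : ℝ) (rv : Fin d → ℝ)
    (k : Fin d → ℤ) : Set (Fin d → ℝ) :=
  {x | ∃ u : Fin d → ℝ, (∀ i, u i ∈ Ico (0 : ℝ) 1) ∧ x = latPt d A ε rv k u}

/-- the averaged boundary condition
`(1/(w^{d-1}|W|)) ∫_{w·W} (ỹ¹(ℓ,x') - ỹ¹(0,x')) dx' = ℓ(1+r)`. -/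
def AvgBC (d : ℕ) [NeZero d] (A : Matrix (Fin d) (Fin d) ℝ) (ε : ℝ) (rv : Fin d → ℝ)
    (Cstar ℓ w : ℝ) (Ws : Set (Fin (d - 1) → ℝ)) (y : (Fin d → ℝ) → Fin d → ℝ) (r : ℝ) : Prop :=
  (∫ x' in w • Ws,
      (tildey d A ε rv Cstar y (consd d ℓ x') 0 - tildey d A ε rv Cstar y (consd d 0 x') 0)) =
    w ^ (d - 1) * (volume Ws).toReal * (ℓ * (1 + r))

/-- no `1`-broken cell meets the boundary faces `{0,ℓ} × w·W̃`. -/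
def NoBrokenFace (d : ℕ) [NeZero d] (A : Matrix (Fin d) (Fin d) ℝ) (ε : ℝ) (rv : Fin d → ℝ)
    (Cstar ℓ w : ℝ) (Wts : Set (Fin (d - 1) → ℝ)) (y : (Fin d → ℝ) → Fin d → ℝ) : Prop :=
  ∀ k : Fin d → ℤ, OneBroken d A ε rv Cstar y k →
    cellRegion d A ε rv k ∩ FaceSet d ℓ w Wts = ∅

/-- the mesoscopic minimization problem `M(U_ε, r)`. -/
def Mmeso (d : ℕ) [NeZero d] (A : Matrix (Fin d) (Fin d) ℝ) (Wcell : CellMat d → ℝ)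
    (ε : ℝ) (rv : Fin d → ℝ) (Cstar ℓ w : ℝ) (Wts Ws : Set (Fin (d - 1) → ℝ)) (r : ℝ) : ℝ :=
  sInf {e | ∃ y : (Fin d → ℝ) → Fin d → ℝ,
    AvgBC d A ε rv Cstar ℓ w Ws y r ∧ NoBrokenFace d A ε rv Cstar ℓ w Wts y ∧
    e = EnergyMeso d A Wcell ε rv ℓ w Ws y}

def einfDist {n : ℕ} (x : Fin n → ℝ) (S : Set (Fin n → ℝ)) : ℝ :=
  sInf {t | ∃ z ∈ S, t = eunorm fun i => x i - z i}

/-- the condition (W form): a connected subset of `(0,1)^{d-1}` of measure in `(1/2, 1]` whose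
boundary has `H^{d-2}`-measure `< D`. -/
def WFormP (d : ℕ) (D : ℝ) (S : Set (Fin (d - 1) → ℝ)) : Prop :=
  (∀ x ∈ S, ∀ i, x i ∈ Ioo (0 : ℝ) 1) ∧ IsConnected S ∧
    1 / 2 < (volume S).toReal ∧ (volume S).toReal ≤ 1 ∧
    μH[(d : ℝ) - 2] (frontier S) < ENNReal.ofReal D

/-- the subset of `W̃` of points of distance `> D'ε^{1-s}` from `∂W̃`. -/
def coreSet (d : ℕ) (D' ε : ℝ) (Wts : Set (Fin (d - 1) → ℝ)) : Set (Fin (d - 1) → ℝ) :=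
  {x ∈ Wts | D' * ε ^ (1 - sExp d) < einfDist x (frontier Wts)}

/-- `W` is the connected component of largest Lebesgue measure of `coreSet`. -/
def LargestComp (d : ℕ) (D' ε : ℝ) (Wts Ws : Set (Fin (d - 1) → ℝ)) : Prop :=
  ∃ x₀ ∈ coreSet d D' ε Wts, Ws = connectedComponentIn (coreSet d D' ε Wts) x₀ ∧
    ∀ x ∈ coreSet d D' ε Wts, volume (connectedComponentIn (coreSet d D' ε Wts) x) ≤ volume Ws

/-- the admissible pairs `(W̃, W)`. -/
def AdmissiblePair (d : ℕ) (D D' ε : ℝ) (Wts Ws : Set (Fin (d - 1) → ℝ)) : Prop :=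
  WFormP d D Wts ∧ LargestComp d D' ε Wts Ws ∧ WFormP d D Ws

/-! the macroscopic body `Ω = (0,l₁) × … × (0,l_d)`. -/

def OmegaBox (d : ℕ) (l : Fin d → ℝ) : Set (Fin d → ℝ) := {x | ∀ i, x i ∈ Ioo 0 (l i)}

def InnerCellOmega (d : ℕ) (A : Matrix (Fin d) (Fin d) ℝ) (ε : ℝ) (l : Fin d → ℝ)
    (k : Fin d → ℤ) : Prop :=
  ∀ u : Fin d → ℝ, (∀ i, u i ∈ Icc (0 : ℝ) 1) → latPt d A ε 0 k u ∈ OmegaBox d l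

/-- the rescaled energy `𝓔_ε(y) = ε^{d-1} Σ_{inner cells} W_cell(∇̄y)`. -/
def EnergyOmega (d : ℕ) (A : Matrix (Fin d) (Fin d) ℝ) (Wcell : CellMat d → ℝ) (ε : ℝ)
    (l : Fin d → ℝ) (y : (Fin d → ℝ) → Fin d → ℝ) : ℝ :=
  ε ^ (d - 1) * ∑' k : Fin d → ℤ,
    if InnerCellOmega d A ε l k then Wcell (dgrad d A ε 0 y k) else 0

/-- `l_A = Σ_j |v_j · e₁|`. -/
def lA (d : ℕ) [NeZero d] (A : Matrix (Fin d) (Fin d) ℝ) : ℝ := ∑ j, |A 0 j|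

/-- the boundary condition of the class `𝒜(a_ε)`:
`y¹(x) = (1+a)x₁` for lattice points `x ∈ Ω` with `x₁ ≤ 2l_Aε` or `x₁ ≥ l₁ - 2l_Aε`. -/
def BdryCondA (d : ℕ) [NeZero d] (A : Matrix (Fin d) (Fin d) ℝ) (ε : ℝ) (l : Fin d → ℝ)
    (a : ℝ) (y : (Fin d → ℝ) → Fin d → ℝ) : Prop :=
  ∀ k : Fin d → ℤ, latPt d A ε 0 k 0 ∈ OmegaBox d l →
    ((latPt d A ε 0 k 0) 0 ≤ 2 * lA d A * ε ∨ l 0 - 2 * lA d A * ε ≤ (latPt d A ε 0 k 0) 0) →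
    y (latPt d A ε 0 k 0) 0 = (1 + a) * (latPt d A ε 0 k 0) 0

/-- `inf {𝓔_ε(y) : y ∈ 𝒜(a_ε)}`. -/
def minEnergy (d : ℕ) [NeZero d] (A : Matrix (Fin d) (Fin d) ℝ) (Wcell : CellMat d → ℝ)
    (ε : ℝ) (l : Fin d → ℝ) (a : ℝ) : ℝ :=
  sInf {e | ∃ y : (Fin d → ℝ) → Fin d → ℝ,
    BdryCondA d A ε l a y ∧ e = EnergyOmega d A Wcell ε l y}

/-! helpers for the interpolation lemmas. -/

/-- the simplicial interpolation on the single cell with index `k`. -/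
def cellInterp (d : ℕ) (A : Matrix (Fin d) (Fin d) ℝ) (ε : ℝ) (rv : Fin d → ℝ)
    (y : (Fin d → ℝ) → Fin d → ℝ) (k : Fin d → ℤ) (x : Fin d → ℝ) : Fin d → ℝ :=
  fun j => cubeInterp d (fun b => y (cellCorner d A ε rv k b) j)
    (fun i => (ε • A)⁻¹.mulVec x i - rv i - (k i : ℝ))

/-- the gradient of a map `ℝ^d → ℝ^d` as a `d×d` array. -/
def gradM (d : ℕ) (f : (Fin d → ℝ) → Fin d → ℝ) (x : Fin d → ℝ) : Fin d → Fin d → ℝ :=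
  fun j i => fderiv ℝ f x (Pi.single i 1) j

def sqnorm (d : ℕ) (F : Fin d → Fin d → ℝ) : ℝ := Real.sqrt (∑ j, ∑ i, F j i ^ 2)

/-- Euclidean distance of a `d×d` matrix to `SO(d)`. -/
def distSO (d : ℕ) (F : Fin d → Fin d → ℝ) : ℝ :=
  sInf {t | ∃ R : Matrix (Fin d) (Fin d) ℝ, IsSO R ∧ t = sqnorm d fun j i => F j i - R j i}

/-- `∇̄y` as a (piecewise constant) function on `ℝ^d`. -/
def dgradFun (d : ℕ) (A : Matrix (Fin d) (Fin d) ℝ) (ε : ℝ) (rv : Fin d → ℝ)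
    (y : (Fin d → ℝ) → Fin d → ℝ) (x : Fin d → ℝ) : CellMat d :=
  dgrad d A ε rv y (cellIndex d A ε rv x)

/-- the directional interpolation `ȳ_ν` on the cells `ε D^ν(λ + [0,1)^d)`. -/
def barInterp (d : ℕ) [NeZero d] (ε Cint : ℝ) (Dν : Matrix (Fin d) (Fin d) ℝ) (ν : Fin d → ℝ)
    (y : (Fin d → ℝ) → Fin d → ℝ) (x : Fin d → ℝ) : Fin d → ℝ :=
  let u := (ε • Dν)⁻¹.mulVec x
  let x0 := ε • Dν.mulVec fun i => (⌊u i⌋ : ℝ)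
  let x1 := fun i => x0 i + ε * ν i
  if eunorm (fun j => y x1 j - y x0 j) ≤ Cint * ε then
    fun j => (1 - (u 0 - (⌊u 0⌋ : ℝ))) * y x0 j + (u 0 - (⌊u 0⌋ : ℝ)) * y x1 j
  else y x0

end Cleavage

namespace Cleavage

/-!
With the Frobenius norm on `ℝ^{d × 2^d}`, the group `SO(d)` acts isometrically by left
multiplication, and `SO̅(d)` is the compact orbit of `Z`. On the part of the compact set
`{G ⊥ V₀, |G| ≤ T}` at distance at least `r` from this orbit, the cell energy is bounded below by a
positive constant. At distance less than `r`, rotate `G` so that its nearest point in the orbit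
becomes `Z`. Minimality of the distance along the curves `exp (t H) Z` makes `G - Z` orthogonal to
the infinitesimal rotations `H Z`, and it is orthogonal to translations because `G` and `Z` are.
On such vectors `Q_cell` is positive definite, hence coercive, so the second-order Taylor expansion
of the energy at its minimum point `Z` gives `W_cell(G) ≥ q |G - Z|²`.
-/

open scoped Topology

section SecondOrder

open Asymptotics

variable {E F : Type*} [NormedAddCommGroup E] [NormedSpace ℝ E] [NormedAddCommGroup F]
  [NormedSpace ℝ F]

theorem sub_taylor_two_isLittleO {f : E → F} {z : E} (hf : ContDiffAt ℝ 2 f z) :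
    (fun x => f x - f z - fderiv ℝ f z (x - z)
        - (1 / 2 : ℝ) • fderiv ℝ (fderiv ℝ f) z (x - z) (x - z))
      =o[𝓝 z] fun x => ‖x - z‖ ^ 2 := by
  set D := fderiv ℝ f z
  set B := fderiv ℝ (fderiv ℝ f) z
  have hsymm : ∀ v w, B v w = B w v := fun v w => (hf.isSymmSndFDerivAt (by simp)).eq v w
  obtain ⟨r, hr, hdiff⟩ := Metric.eventually_nhds_iff_ball.1 <|
    (hf.eventually (by simp)).mono fun x hx => hx.differentiableAt two_ne_zero
  have hderiv : ∀ x ∈ Metric.ball z r, HasFDerivWithinAt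
      (fun x => f x - D (x - z) - (1 / 2 : ℝ) • B (x - z) (x - z))
      (fderiv ℝ f x - D - B (x - z)) (Metric.ball z r) x := by
    intro x hx
    have hsub : HasFDerivAt (fun x => x - z) (ContinuousLinearMap.id ℝ E) x :=
      (hasFDerivAt_id x).sub_const z
    have hquad := (B.hasFDerivAt_of_bilinear hsub hsub).const_smul (1 / 2 : ℝ)
    have hlin := (hdiff x hx).hasFDerivAt.sub (D.hasFDerivAt.comp x hsub)
    convert! (hlin.sub hquad).hasFDerivWithinAt using 1
    ext v
    have hpolar : B (x - z) v = (1 / 2 : ℝ) • (B (x - z) v + B v (x - z)) := by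
      rw [hsymm v, ← two_smul ℝ, smul_smul]
      norm_num
    simpa using hpolar
  have hlittle : (fun x => fderiv ℝ f x - D - B (x - z)) =o[𝓝 z] fun x => ‖x - z‖ ^ 1 := by
    have hB : HasFDerivAt (fderiv ℝ f) B z :=
      ((hf.fderiv_right (m := 1) (by norm_num)).differentiableAt one_ne_zero).hasFDerivAt
    simpa only [pow_one] using hB.isLittleO.norm_right
  have htaylor := (convex_ball z r).isLittleO_pow_succ (Metric.mem_ball_self hr) hderiv
    (hlittle.mono nhdsWithin_le_nhds)
  rw [nhdsWithin_eq_nhds.2 (Metric.ball_mem_nhds z hr)] at htaylor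
  refine htaylor.congr_left fun x => ?_
  simp only [sub_self, map_zero, smul_zero, sub_zero]
  abel

theorem isCoercive_of_posDef [FiniteDimensional ℝ E] {B : E →L[ℝ] E →L[ℝ] ℝ}
    (hB : ∀ v, v ≠ 0 → 0 < B v v) : IsCoercive B := by
  have hcont : ContinuousOn (fun v => B v v) (Metric.sphere 0 1) := by fun_prop
  obtain ⟨q, hq, hle⟩ := (isCompact_sphere (0 : E) 1).exists_forall_le' hcont
    fun v hv => hB v (ne_zero_of_mem_unit_sphere ⟨v, hv⟩)
  refine ⟨q, hq, fun v => ?_⟩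
  rcases eq_or_ne v 0 with rfl | hv
  · simp
  have hnorm : 0 < ‖v‖ := norm_pos_iff.2 hv
  have hunit : q ≤ B (‖v‖⁻¹ • v) (‖v‖⁻¹ • v) := hle _ (by simp [norm_smul, hnorm.ne'])
  calc q * ‖v‖ * ‖v‖ ≤ B (‖v‖⁻¹ • v) (‖v‖⁻¹ • v) * ‖v‖ * ‖v‖ := by gcongr
    _ = B v v := by simp [field]

theorem exists_quadratic_growth_of_isLocalMin {f : E → ℝ} {z : E} (hf : ContDiffAt ℝ 2 f z)
    (hmin : IsLocalMin f z) (N : Submodule ℝ E) [FiniteDimensional ℝ N]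
    (hpos : ∀ v ∈ N, v ≠ 0 → 0 < iteratedFDeriv ℝ 2 f z ![v, v]) :
    ∃ q > 0, ∀ᶠ x in 𝓝 z, x - z ∈ N → q * ‖x - z‖ ^ 2 ≤ f x - f z := by
  obtain ⟨q, hq, hle⟩ : IsCoercive
      ((fderiv ℝ (fderiv ℝ f) z).bilinearComp N.subtypeL N.subtypeL) :=
    isCoercive_of_posDef fun v hv => by
      simpa [iteratedFDeriv_two_apply] using hpos v v.2 (by simpa using hv)
  refine ⟨q / 4, by positivity, ?_⟩
  filter_upwards [(sub_taylor_two_isLittleO hf).bound (show 0 < q / 4 by positivity)]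
    with x hx hN
  have hcoer : q * ‖x - z‖ * ‖x - z‖ ≤ fderiv ℝ (fderiv ℝ f) z (x - z) (x - z) := hle ⟨_, hN⟩
  rw [hmin.fderiv_eq_zero] at hx
  simp only [zero_apply, sub_zero, smul_eq_mul, norm_pow, norm_norm] at hx
  linarith [(abs_le.1 hx).1]

end SecondOrder

theorem exists_le_mul_of_isCompact {X : Type*} [TopologicalSpace X] {K : Set X} {f g : X → ℝ}
    (hK : IsCompact K) (hf : ContinuousOn f K) (hg : ContinuousOn g K)
    (hpos : ∀ x ∈ K, 0 < f x) : ∃ C > 0, ∀ x ∈ K, g x ≤ C * f x := by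
  obtain ⟨M, hM⟩ := hK.bddAbove_image (hg.div hf fun x hx => (hpos x hx).ne')
  exact ⟨max M 1, by positivity, fun x hx => (div_le_iff₀ (hpos x hx)).1 <|
    (hM (mem_image_of_mem _ hx)).trans (le_max_left M 1)⟩

section Orbit

variable {Γ E : Type*} [Group Γ] [PseudoMetricSpace E] [MulAction Γ E] [IsIsometricSMul Γ E]

theorem infDist_smul_orbit (g : Γ) (x z : E) :
    Metric.infDist (g • x) (MulAction.orbit Γ z) = Metric.infDist x (MulAction.orbit Γ z) := by
  conv_lhs => rw [← MulAction.smul_orbit g z, ← image_smul]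
  exact Metric.infDist_image (isometry_smul E g)

theorem exists_smul_dist_eq_infDist_orbit {z : E} (hz : IsCompact (MulAction.orbit Γ z)) (x : E) :
    ∃ g : Γ, dist (g • x) z = Metric.infDist x (MulAction.orbit Γ z) := by
  obtain ⟨_, ⟨g, rfl⟩, hg⟩ := hz.exists_infDist_eq_dist (MulAction.nonempty_orbit z) x
  exact ⟨g⁻¹, by rw [hg, ← dist_smul g (g⁻¹ • x) z, smul_inv_smul]⟩

theorem exists_infDist_orbit_sq_le {f : E → ℝ} {S : Set E} {z : E} {q : ℝ}
    (hz : IsCompact (MulAction.orbit Γ z)) (hS : IsCompact S) (hf : ContinuousOn f S)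
    (hSinv : ∀ (g : Γ), ∀ x ∈ S, g • x ∈ S) (hfinv : ∀ (g : Γ), ∀ x ∈ S, f (g • x) = f x)
    (hpos : ∀ x ∈ S, x ∉ MulAction.orbit Γ z → 0 < f x) (hq : 0 < q)
    (hgrowth : ∀ᶠ x in 𝓝 z, x ∈ S → dist x z = Metric.infDist x (MulAction.orbit Γ z) →
      q * dist x z ^ 2 ≤ f x) :
    ∃ C > 0, ∀ x ∈ S, Metric.infDist x (MulAction.orbit Γ z) ^ 2 ≤ C * f x := by
  obtain ⟨r, hr, hnear⟩ := Metric.eventually_nhds_iff.1 hgrowth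
  have hcont : Continuous fun x => Metric.infDist x (MulAction.orbit Γ z) :=
    Metric.continuous_infDist_pt _
  set K := S ∩ {x | r ≤ Metric.infDist x (MulAction.orbit Γ z)}
  have hK : IsCompact K := hS.inter_right (isClosed_le continuous_const hcont)
  have hfpos : ∀ x ∈ K, 0 < f x := fun x hx => hpos x hx.1 fun hxz =>
    hr.not_ge (hx.2.trans_eq (Metric.infDist_zero_of_mem hxz))
  obtain ⟨C, hC, hfar⟩ := exists_le_mul_of_isCompact hK (hf.mono inter_subset_left)
    (hcont.pow 2).continuousOn hfpos
  refine ⟨max C q⁻¹, by positivity, fun x hx => ?_⟩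
  rcases le_or_gt r (Metric.infDist x (MulAction.orbit Γ z)) with hrx | hxr
  · have hfx := hfpos x ⟨hx, hrx⟩
    exact (hfar x ⟨hx, hrx⟩).trans (by gcongr; exact le_max_left C q⁻¹)
  · obtain ⟨g, hg⟩ := exists_smul_dist_eq_infDist_orbit hz x
    have hgx : q * Metric.infDist x (MulAction.orbit Γ z) ^ 2 ≤ f x := by
      rw [← hg, ← hfinv g x hx]
      exact hnear (hg.trans_lt hxr) (hSinv g x hx) (hg.trans (infDist_smul_orbit g x z).symm)
    have hfx : 0 ≤ f x := hgx.trans' (by positivity)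
    calc Metric.infDist x (MulAction.orbit Γ z) ^ 2 ≤ q⁻¹ * f x := (le_inv_mul_iff₀ hq).2 hgx
      _ ≤ max C q⁻¹ * f x := by gcongr; exact le_max_right C q⁻¹

end Orbit

theorem inner_eq_zero_of_isLocalMin_norm_sub {V : Type*} [NormedAddCommGroup V]
    [InnerProductSpace ℝ V] {c : ℝ → V} {c' x : V} {t₀ : ℝ} (hc : HasDerivAt c c' t₀)
    (hmin : IsLocalMin (fun t => ‖x - c t‖) t₀) : inner ℝ (x - c t₀) c' = 0 := by
  have hderiv := (hc.const_sub x).norm_sq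
  have hminsq : IsLocalMin (fun t => ‖x - c t‖ ^ 2) t₀ := hmin.mono fun t ht =>
    pow_le_pow_left₀ (norm_nonneg _) ht 2
  simpa using hminsq.hasDerivAt_eq_zero hderiv

section SpecialOrthogonal

open scoped Matrix

variable {n : Type*} [Fintype n] [DecidableEq n]

theorem isCompact_specialUnitaryGroup {𝕜 : Type*} [RCLike 𝕜] :
    IsCompact (Matrix.specialUnitaryGroup n 𝕜 : Set (Matrix n n 𝕜)) := by
  have hbox : IsCompact (univ.pi fun _ : n => univ.pi fun _ : n => Metric.closedBall (0 : 𝕜) 1) :=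
    isCompact_univ_pi fun _ => isCompact_univ_pi fun _ => isCompact_closedBall 0 1
  have hclosed : IsClosed (Matrix.specialUnitaryGroup n 𝕜 : Set (Matrix n n 𝕜)) :=
    isClosed_unitary.inter (isClosed_singleton.preimage continuous_id.matrix_det)
  exact hbox.of_isClosed_subset hclosed fun U hU i _ j _ =>
    mem_closedBall_zero_iff.2 (entry_norm_bound_of_unitary hU.1 i j)

theorem exp_mem_specialOrthogonalGroup {H : Matrix n n ℝ} (hH : Hᵀ = -H) :
    NormedSpace.exp H ∈ Matrix.specialOrthogonalGroup n ℝ := by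
  have horth : ∀ K : Matrix n n ℝ, Kᵀ = -K → (NormedSpace.exp K)ᵀ * NormedSpace.exp K = 1 := by
    intro K hK
    rw [← Matrix.exp_transpose, hK, ← Matrix.exp_add_of_commute _ _ (Commute.refl K).neg_left,
      neg_add_cancel, NormedSpace.exp_zero]
  refine Matrix.mem_specialOrthogonalGroup_iff.2
    ⟨(Matrix.mem_orthogonalGroup_iff' n ℝ).2 (horth H hH), ?_⟩
  -- `det (exp H) = det (exp (H / 2)) ^ 2`, and `exp (H / 2)` is orthogonal.
  have hhalf : NormedSpace.exp H =
      NormedSpace.exp ((1 / 2 : ℝ) • H) * NormedSpace.exp ((1 / 2 : ℝ) • H) := by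
    rw [← Matrix.exp_add_of_commute _ _ (Commute.refl _), ← add_smul, add_halves, one_smul]
  have hdet := congrArg Matrix.det
    (horth ((1 / 2 : ℝ) • H) (by rw [Matrix.transpose_smul, hH, smul_neg]))
  rwa [Matrix.det_mul, Matrix.det_transpose, Matrix.det_one, ← Matrix.det_mul, ← hhalf] at hdet

end SpecialOrthogonal

section CellSpace

local notation "SO(" d ")" => Matrix.specialOrthogonalGroup (Fin d) ℝ

open scoped Matrix

variable {d : ℕ}

theorem isSO_iff_mem {R : Matrix (Fin d) (Fin d) ℝ} : IsSO R ↔ R ∈ SO(d) := by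
  rw [Matrix.mem_specialOrthogonalGroup_iff, Matrix.mem_orthogonalGroup_iff', IsSO]

theorem rotCell_one (G : CellMat d) : rotCell 1 G = G :=
  Matrix.one_mul (Matrix.of G)

theorem rotCell_mul (R S : Matrix (Fin d) (Fin d) ℝ) (G : CellMat d) :
    rotCell (R * S) G = rotCell R (rotCell S G) :=
  Matrix.mul_assoc R S (Matrix.of G)

theorem rotCell_sub (R : Matrix (Fin d) (Fin d) ℝ) (G H : CellMat d) :
    rotCell R (G - H) = rotCell R G - rotCell R H :=
  Matrix.mul_sub R (Matrix.of G) (Matrix.of H)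

theorem isLinearMap_rotCell_left (G : CellMat d) : IsLinearMap ℝ fun R => rotCell R G where
  map_add R S := Matrix.add_mul R S (Matrix.of G)
  map_smul t R := Matrix.smul_mul t R (Matrix.of G)

theorem frobInner_rotCell_left (R : Matrix (Fin d) (Fin d) ℝ) (G H : CellMat d) :
    frobInner (rotCell R G) H = frobInner G (rotCell Rᵀ H) := by
  have hcolumns : ∀ K L : CellMat d, frobInner K L = ∑ b, (K · b) ⬝ᵥ (L · b) :=
    fun _ _ => Finset.sum_comm
  rw [hcolumns, hcolumns]
  refine Finset.sum_congr rfl fun b _ => ?_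
  change (R *ᵥ (G · b)) ⬝ᵥ (H · b) = (G · b) ⬝ᵥ (Rᵀ *ᵥ (H · b))
  rw [Matrix.dotProduct_mulVec, Matrix.vecMul_transpose]

theorem continuous_rotCell_left (G : CellMat d) : Continuous fun R => rotCell R G :=
  LinearMap.continuous_of_finiteDimensional ((isLinearMap_rotCell_left G).mk' _)

open scoped Matrix.Norms.Operator in
theorem hasDerivAt_rotCell_exp (H : Matrix (Fin d) (Fin d) ℝ) (G : CellMat d) :
    HasDerivAt (fun t : ℝ => rotCell (NormedSpace.exp (t • H)) G) (rotCell H G) 0 := by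
  have hexp := hasDerivAt_exp_smul_const' H (0 : ℝ)
  rw [zero_smul, NormedSpace.exp_zero, mul_one] at hexp
  exact ((isLinearMap_rotCell_left G).mk' _).toContinuousLinearMap.hasFDerivAt.comp_hasDerivAt _
    hexp

/-- The space `ℝ^{d × 2^d}` with the Frobenius norm; `CellMat d` itself carries the supremum
norm. -/
abbrev CellSpace (d : ℕ) := EuclideanSpace ℝ (Fin d × (Fin d → Bool))

/-- The identification of `CellMat d` with its Frobenius-normed copy. -/
def toCellSpace (d : ℕ) : CellMat d ≃L[ℝ] CellSpace d :=
  (LinearEquiv.curry ℝ ℝ (Fin d) (Fin d → Bool)).symm.toContinuousLinearEquiv.trans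
    (EuclideanSpace.equiv (Fin d × (Fin d → Bool)) ℝ).symm

theorem toCellSpace_apply (G : CellMat d) (j : Fin d) (b : Fin d → Bool) :
    toCellSpace d G (j, b) = G j b :=
  rfl

theorem mnorm_eq_norm (G : CellMat d) : mnorm G = ‖toCellSpace d G‖ := by
  simp [mnorm, EuclideanSpace.norm_eq, Fintype.sum_prod_type, toCellSpace_apply]

theorem frobInner_eq_inner (G H : CellMat d) :
    frobInner G H = inner ℝ (toCellSpace d G) (toCellSpace d H) := by
  simp [frobInner, PiLp.inner_apply, Fintype.sum_prod_type, toCellSpace_apply, mul_comm]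

theorem mnorm_rotCell {R : Matrix (Fin d) (Fin d) ℝ} (hR : IsSO R) (G : CellMat d) :
    mnorm (rotCell R G) = mnorm G := by
  rw [mnorm_eq_norm, mnorm_eq_norm, norm_eq_sqrt_real_inner, norm_eq_sqrt_real_inner,
    ← frobInner_eq_inner, ← frobInner_eq_inner, frobInner_rotCell_left, ← rotCell_mul, hR.1,
    rotCell_one]

/-- Rotations act on cell deformations by left multiplication, `R • G = R G`. -/
instance : MulAction SO(d) (CellSpace d) where
  smul R x := toCellSpace d (rotCell R ((toCellSpace d).symm x))
  one_smul x := by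
    change toCellSpace d (rotCell 1 ((toCellSpace d).symm x)) = x
    rw [rotCell_one, ContinuousLinearEquiv.apply_symm_apply]
  mul_smul R S x := by
    change toCellSpace d (rotCell ((R : Matrix (Fin d) (Fin d) ℝ) * S) ((toCellSpace d).symm x)) =
      toCellSpace d (rotCell R
        ((toCellSpace d).symm (toCellSpace d (rotCell S ((toCellSpace d).symm x)))))
    rw [rotCell_mul, ContinuousLinearEquiv.symm_apply_apply]

theorem smul_toCellSpace (R : SO(d)) (G : CellMat d) :
    R • toCellSpace d G = toCellSpace d (rotCell R G) :=
  congrArg (fun H => toCellSpace d (rotCell R H)) ((toCellSpace d).symm_apply_apply G)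

instance : IsIsometricSMul SO(d) (CellSpace d) where
  isometry_smul R := Isometry.of_dist_eq fun x y => by
    obtain ⟨G, rfl⟩ := (toCellSpace d).surjective x
    obtain ⟨H, rfl⟩ := (toCellSpace d).surjective y
    rw [smul_toCellSpace, smul_toCellSpace, dist_eq_norm, dist_eq_norm, ← map_sub, ← map_sub,
      ← rotCell_sub, ← mnorm_eq_norm, ← mnorm_eq_norm, mnorm_rotCell (isSO_iff_mem.2 R.2)]

theorem isCompact_orbit (x : CellSpace d) : IsCompact (MulAction.orbit SO(d) x) := by
  have : CompactSpace SO(d) := isCompact_iff_compactSpace.1 isCompact_specialUnitaryGroup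
  refine isCompact_range ?_
  exact (toCellSpace d).continuous.comp ((continuous_rotCell_left _).comp continuous_subtype_val)

theorem image_SObar_eq_orbit (A : Matrix (Fin d) (Fin d) ℝ) :
    toCellSpace d '' SObar d A = MulAction.orbit SO(d) (toCellSpace d (Zmat d A)) := by
  ext x
  simp [SObar, MulAction.mem_orbit_iff, smul_toCellSpace, isSO_iff_mem, Subtype.exists]

theorem distSObar_eq_infDist (A : Matrix (Fin d) (Fin d) ℝ) (G : CellMat d) :
    distSObar d A G =
      Metric.infDist (toCellSpace d G) (MulAction.orbit SO(d) (toCellSpace d (Zmat d A))) := by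
  rw [← image_SObar_eq_orbit, Metric.infDist_eq_iInf, ← sInf_image', image_image]
  simp only [distSObar, mnorm_eq_norm, map_sub, dist_eq_norm]
  simp [image, eq_comm]

theorem perpTrans_iff_frobInner_transCell {G : CellMat d} :
    PerpTrans G ↔ ∀ c : Fin d → ℝ, frobInner G (transCell c) = 0 := by
  simp only [frobInner, transCell, ← Finset.sum_mul]
  exact ⟨fun hG c => by simp [hG _], fun hG j => by
    simpa [Pi.single_apply] using hG (Pi.single j 1)⟩

theorem PerpTrans.sub {G H : CellMat d} (hG : PerpTrans G) (hH : PerpTrans H) :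
    PerpTrans (G - H) := fun j => by
  simp [hG j, hH j]

theorem PerpTrans.rotCell {G : CellMat d} (hG : PerpTrans G) (R : Matrix (Fin d) (Fin d) ℝ) :
    PerpTrans (rotCell R G) :=
  perpTrans_iff_frobInner_transCell.2 fun c => by
    rw [frobInner_rotCell_left]
    exact perpTrans_iff_frobInner_transCell.1 hG (Rᵀ *ᵥ c)

theorem sum_cornerVec : ∑ b, cornerVec (d := d) b = 0 := by
  have hflip : ∑ b, cornerVec (d := d) b = ∑ b, -cornerVec (d := d) b :=
    Fintype.sum_equiv ((Equiv.refl (Fin d)).arrowCongr Equiv.boolNot) _ _ fun b => by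
      ext i
      cases hi : b i <;> simp [cornerVec, hi]
  exact self_eq_neg.1 (hflip.trans (Finset.sum_neg_distrib _))

theorem perpTrans_Zmat (A : Matrix (Fin d) (Fin d) ℝ) : PerpTrans (Zmat d A) := by
  have hsum : ∑ b, A *ᵥ cornerVec b = 0 := by
    rw [← Matrix.mulVec_sum, sum_cornerVec, Matrix.mulVec_zero]
  intro j
  simpa [Zmat] using congrFun hsum j

theorem isCompact_setOf_perpTrans_mnorm_le (T : ℝ) :
    IsCompact {G : CellMat d | PerpTrans G ∧ mnorm G ≤ T} := by
  have hperp : IsClosed {G : CellMat d | PerpTrans G} := by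
    simp only [PerpTrans, ofPred_forall]
    exact isClosed_iInter fun j => isClosed_eq (by fun_prop) continuous_const
  have hball : IsCompact (toCellSpace d ⁻¹' Metric.closedBall 0 T) :=
    (toCellSpace d).toHomeomorph.isCompact_preimage.2 (isCompact_closedBall 0 T)
  convert! hball.inter_left hperp using 1
  ext G
  simp [mnorm_eq_norm]

theorem transCell_eq_zero_of_perpTrans {c : Fin d → ℝ} (hc : PerpTrans (transCell c)) :
    transCell c = 0 := by
  have hself := perpTrans_iff_frobInner_transCell.1 hc c
  rwa [frobInner_eq_inner, inner_self_eq_zero, map_eq_zero_iff _ (toCellSpace d).injective] at hself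

variable {A : Matrix (Fin d) (Fin d) ℝ} {W : CellMat d → ℝ}

theorem MinimalOnSO.mem_SObar (hW : MinimalOnSO d A W) {G : CellMat d} (hG : PerpTrans G)
    (hWG : W G = 0) : G ∈ SObar d A := by
  obtain ⟨R, hR, c, rfl⟩ := (hW G).1 hWG
  have hc : PerpTrans (transCell c) := by
    simpa using hG.sub ((perpTrans_Zmat A).rotCell R)
  exact ⟨R, hR, by rw [transCell_eq_zero_of_perpTrans hc, add_zero]⟩

theorem MinimalOnSO.apply_Zmat (hW : MinimalOnSO d A W) : W (Zmat d A) = 0 :=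
  (hW _).2 ⟨1, isSO_iff_mem.2 (one_mem _), 0, by rw [rotCell_one]; exact (add_zero _).symm⟩

theorem FrameIndiff.apply_rotCell (hW : FrameIndiff d W)
    {R : Matrix (Fin d) (Fin d) ℝ} (hR : IsSO R) (G : CellMat d) : W (rotCell R G) = W G := by
  simpa [show transCell (0 : Fin d → ℝ) = 0 from rfl] using hW G R 0 hR

theorem Zmat_mem_SObar (A : Matrix (Fin d) (Fin d) ℝ) : Zmat d A ∈ SObar d A :=
  ⟨1, isSO_iff_mem.2 (one_mem _), (rotCell_one _).symm⟩

/-- The variations of the reference cell orthogonal to all translations and infinitesimal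
rotations, on which `HessPosDef` asserts that `Qcell` is positive. -/
def normalSpace (d : ℕ) (A : Matrix (Fin d) (Fin d) ℝ) : Submodule ℝ (CellMat d) where
  carrier := {V | (∀ c : Fin d → ℝ, frobInner V (transCell c) = 0) ∧
    ∀ H : Matrix (Fin d) (Fin d) ℝ, Hᵀ = -H → frobInner V (rotCell H (Zmat d A)) = 0}
  add_mem' {V V'} hV hV' := by
    simp only [frobInner_eq_inner, mem_ofPred_eq, map_add, inner_add_left] at *
    exact ⟨fun c => by rw [hV.1, hV'.1, add_zero],
      fun H hH => by rw [hV.2 H hH, hV'.2 H hH, add_zero]⟩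
  zero_mem' := by simp [frobInner_eq_inner]
  smul_mem' t V hV := by
    simp only [frobInner_eq_inner, mem_ofPred_eq, map_smul, real_inner_smul_left] at *
    exact ⟨fun c => by rw [hV.1, mul_zero], fun H hH => by rw [hV.2 H hH, mul_zero]⟩

theorem sub_Zmat_mem_normalSpace {G : CellMat d} (hG : PerpTrans G)
    (hnearest : dist (toCellSpace d G) (toCellSpace d (Zmat d A)) =
      Metric.infDist (toCellSpace d G) (MulAction.orbit SO(d) (toCellSpace d (Zmat d A)))) :
    G - Zmat d A ∈ normalSpace d A := by
  refine ⟨perpTrans_iff_frobInner_transCell.1 (hG.sub (perpTrans_Zmat A)), fun H hH => ?_⟩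
  -- The curve `t ↦ exp (t H) Z` stays in the orbit and meets the nearest point `Z` at `t = 0`.
  have hcurve : HasDerivAt
      (fun t : ℝ => toCellSpace d (rotCell (NormedSpace.exp (t • H)) (Zmat d A)))
      (toCellSpace d (rotCell H (Zmat d A))) 0 :=
    (toCellSpace d).hasFDerivAt.comp_hasDerivAt _ (hasDerivAt_rotCell_exp H (Zmat d A))
  have hmin : IsLocalMin (fun t : ℝ => ‖toCellSpace d G -
      toCellSpace d (rotCell (NormedSpace.exp (t • H)) (Zmat d A))‖) 0 := by
    refine Eventually.of_forall fun t => ?_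
    simp only [zero_smul, NormedSpace.exp_zero, rotCell_one, ← dist_eq_norm]
    rw [hnearest]
    refine Metric.infDist_le_dist_of_mem ⟨⟨NormedSpace.exp (t • H),
      exp_mem_specialOrthogonalGroup (by rw [Matrix.transpose_smul, hH, smul_neg])⟩, ?_⟩
    exact smul_toCellSpace _ _
  have horth := inner_eq_zero_of_isLocalMin_norm_sub hcurve hmin
  rwa [zero_smul, NormedSpace.exp_zero, rotCell_one, ← map_sub, ← frobInner_eq_inner] at horth

theorem SmoothNearSO.contDiffAt_Zmat (hW : SmoothNearSO d A W) : ContDiffAt ℝ 2 W (Zmat d A) := by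
  obtain ⟨-, U, hU, hSOU, hWU⟩ := hW
  exact hWU.contDiffAt (hU.mem_nhds (hSOU (Zmat_mem_SObar A)))

theorem HessPosDef.exists_quadratic_growth (hPos : HessPosDef d A W)
    (hW : ContDiffAt ℝ 2 W (Zmat d A)) (hmin : IsLocalMin W (Zmat d A)) :
    ∃ q > 0, ∀ᶠ G in 𝓝 (Zmat d A), G - Zmat d A ∈ normalSpace d A →
      q * dist (toCellSpace d G) (toCellSpace d (Zmat d A)) ^ 2 ≤ W G - W (Zmat d A) := by
  obtain ⟨q, hq, hgrowth⟩ := exists_quadratic_growth_of_isLocalMin hW hmin (normalSpace d A)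
    fun V hV hV0 => hPos V hV0 hV.1 hV.2
  obtain ⟨M, hM, hbound⟩ := (toCellSpace d : CellMat d →L[ℝ] CellSpace d).bound
  refine ⟨q / M ^ 2, by positivity, hgrowth.mono fun G hG hN => ?_⟩
  calc q / M ^ 2 * dist (toCellSpace d G) (toCellSpace d (Zmat d A)) ^ 2
      ≤ q / M ^ 2 * (M * ‖G - Zmat d A‖) ^ 2 := by
        rw [dist_eq_norm, ← map_sub]
        gcongr
        exact hbound _
    _ = q * ‖G - Zmat d A‖ ^ 2 := by field_simp
    _ ≤ W G - W (Zmat d A) := hG hN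

theorem HessPosDef.exists_infDist_orbit_growth (hPos : HessPosDef d A W)
    (hW : ContDiffAt ℝ 2 W (Zmat d A)) (hmin : IsLocalMin W (Zmat d A)) :
    ∃ q > 0, ∀ᶠ x in 𝓝 (toCellSpace d (Zmat d A)), PerpTrans ((toCellSpace d).symm x) →
      dist x (toCellSpace d (Zmat d A)) =
        Metric.infDist x (MulAction.orbit SO(d) (toCellSpace d (Zmat d A))) →
      q * dist x (toCellSpace d (Zmat d A)) ^ 2 ≤
        W ((toCellSpace d).symm x) - W (Zmat d A) := by
  obtain ⟨q, hq, hgrowth⟩ := hPos.exists_quadratic_growth hW hmin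
  have hsymm := (toCellSpace d).symm.continuous.tendsto' _ _
    ((toCellSpace d).symm_apply_apply (Zmat d A))
  refine ⟨q, hq, (hsymm.eventually hgrowth).mono fun x hx hperp hnearest => ?_⟩
  obtain ⟨G, rfl⟩ := (toCellSpace d).surjective x
  rw [ContinuousLinearEquiv.symm_apply_apply] at hx hperp ⊢
  exact hx (sub_Zmat_mem_normalSpace hperp hnearest)

theorem dist_sq_le_cell_energy_general
    (d : ℕ) (A : Matrix (Fin d) (Fin d) ℝ) (W : CellMat d → ℝ) (hW0 : ∀ G, 0 ≤ W G)
    (hFrame : FrameIndiff d W) (hZero : MinimalOnSO d A W)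
    (hSmooth : SmoothNearSO d A W) (hPos : HessPosDef d A W) (T : ℝ) :
    ∃ C > (0 : ℝ), ∀ G : CellMat d, PerpTrans G → mnorm G ≤ T →
      distSObar d A G ^ 2 ≤ C * W G := by
  have hmin : IsLocalMin W (Zmat d A) :=
    Eventually.of_forall fun G => hZero.apply_Zmat.trans_le (hW0 G)
  obtain ⟨q, hq, hgrowth⟩ := hPos.exists_infDist_orbit_growth hSmooth.contDiffAt_Zmat hmin
  set S := toCellSpace d '' {G : CellMat d | PerpTrans G ∧ mnorm G ≤ T}
  set f : CellSpace d → ℝ := W ∘ (toCellSpace d).symm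
  have hfW : ∀ G, f (toCellSpace d G) = W G := by simp [f]
  have hSinv : ∀ R : SO(d), ∀ x ∈ S, R • x ∈ S := by
    rintro R _ ⟨G, ⟨hG, hGT⟩, rfl⟩
    exact ⟨rotCell R G, ⟨hG.rotCell R, (mnorm_rotCell (isSO_iff_mem.2 R.2) G).trans_le hGT⟩,
      (smul_toCellSpace R G).symm⟩
  have hfinv : ∀ R : SO(d), ∀ x ∈ S, f (R • x) = f x := by
    rintro R _ ⟨G, -, rfl⟩
    rw [smul_toCellSpace, hfW, hfW, hFrame.apply_rotCell (isSO_iff_mem.2 R.2)]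
  have hfpos : ∀ x ∈ S, x ∉ MulAction.orbit SO(d) (toCellSpace d (Zmat d A)) → 0 < f x := by
    rintro _ ⟨G, ⟨hG, -⟩, rfl⟩ hGZ
    rw [← image_SObar_eq_orbit, (toCellSpace d).injective.mem_set_image] at hGZ
    exact hfW G ▸ (hW0 G).lt_of_ne' fun hWG => hGZ (hZero.mem_SObar hG hWG)
  obtain ⟨C, hC, hle⟩ := exists_infDist_orbit_sq_le (isCompact_orbit _)
    ((isCompact_setOf_perpTrans_mnorm_le T).image (toCellSpace d).continuous)
    (hSmooth.1.comp (toCellSpace d).symm.continuous).continuousOn hSinv hfinv hfpos hq <|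
      hgrowth.mono <| by
        rintro _ hx ⟨G, ⟨hG, -⟩, rfl⟩
        simpa [f, hZero.apply_Zmat] using hx (by simpa using hG)
  refine ⟨C, hC, fun G hG hGT => ?_⟩
  rw [distSObar_eq_infDist, ← hfW]
  exact hle _ (mem_image_of_mem _ ⟨hG, hGT⟩)

end CellSpace

/-- For every `T > 0` there is `C > 0` with
`dist²(G, SO̅(d)) ≤ C · W_cell(G)` for all `G ⊥ V₀` with `|G| ≤ T`. -/
theorem dist_sq_le_cell_energy
    (d : ℕ) (hd : 2 ≤ d) (A : Matrix (Fin d) (Fin d) ℝ) (hA : 0 < A.det)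
    (W : CellMat d → ℝ) (hW0 : ∀ G, 0 ≤ W G)
    (hFrame : FrameIndiff d W) (hZero : MinimalOnSO d A W)
    (hSmooth : SmoothNearSO d A W) (hPos : HessPosDef d A W)
    (T : ℝ) (hT : 0 < T) :
    ∃ C > (0 : ℝ), ∀ G : CellMat d, PerpTrans G → mnorm G ≤ T →
      distSObar d A G ^ 2 ≤ C * W G :=
  dist_sq_le_cell_energy_general d A W hW0 hFrame hZero hSmooth hPos T

end Cleavage
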